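/- arXiv:2505.00648 — 3 statements merged into one kernel-verified Lean document; each statement's English description precedes it below -/
import Mathlib

section
/- Let H be an m×m real symmetric positive-definite matrix, let B be an m×m real symmetric matrix, let Q_S be an m×k real matrix and Q_L an m×(m−k) real matrix such that Q_Sᵀ H Q_S = I_k, Q_Lᵀ H Q_L = I_{m−k}, Q_Sᵀ H Q_L = 0, Q_Lᵀ B Q_S = 0, and Q_Lᵀ B Q_L is invertible. Then Q_S Q_Sᵀ H + Q_L (Q_Lᵀ B Q_L)⁻¹ Q_Lᵀ B = I_m. -/
open Matrix

/-!
The identities `Q_Sᵀ H Q_S = 1`, `Q_Sᵀ H Q_L = 0` and `Q_Lᵀ B Q_S = 0` say that the rows `Q_Sᵀ H`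
and `(Q_Lᵀ B Q_L)⁻¹ Q_Lᵀ B`, stacked, form a left inverse of the block row `[Q_S, Q_L]`. Since
`[Q_S, Q_L]` has at least as many columns as rows, a left inverse is also a right inverse, and the
right-inverse equation is the decomposition of the identity.
-/

section StablyFinite

variable {R n s l : Type*} [Semiring R] [IsStablyFiniteRing R]
  [Fintype n] [DecidableEq n] [Fintype s] [DecidableEq s] [Fintype l] [DecidableEq l]

theorem matrix_mul_eq_one_symm_of_card_le {A : Matrix s n R} {B : Matrix n s R}
    (hcard : Fintype.card n ≤ Fintype.card s) (hAB : A * B = 1) : B * A = 1 := by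
  obtain ⟨e⟩ := Function.Embedding.nonempty_of_card_le hcard
  -- `A * E` and `F * B` pad `A` and `B` with zeros to square matrices.
  let E : Matrix n s R := (1 : Matrix s s R).submatrix e id
  let F : Matrix s n R := (1 : Matrix s s R).submatrix id e
  have hEF : E * F = 1 := by
    rw [← submatrix_mul _ _ _ _ _ Function.bijective_id, Matrix.one_mul,
      submatrix_one _ e.injective]
  have hpad : A * E * (F * B) = 1 := by
    rw [Matrix.mul_assoc, ← Matrix.mul_assoc E, hEF, Matrix.one_mul, hAB]
  calc B * A = E * F * (B * A) * (E * F) := by rw [hEF, Matrix.one_mul, Matrix.mul_one]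
    _ = E * (F * B * (A * E)) * F := by simp only [Matrix.mul_assoc]
    _ = 1 := by rw [mul_eq_one_comm.mp hpad, Matrix.mul_one, hEF]

theorem mul_add_mul_eq_one_of_biorthogonal {S : Matrix n s R} {L : Matrix n l R}
    {U : Matrix s n R} {V : Matrix l n R}
    (hcard : Fintype.card n ≤ Fintype.card s + Fintype.card l)
    (hUS : U * S = 1) (hUL : U * L = 0) (hVS : V * S = 0) (hVL : V * L = 1) :
    S * U + L * V = 1 := by
  have hleft : fromRows U V * fromCols S L = 1 := by
    rw [fromRows_mul_fromCols, hUS, hUL, hVS, hVL, fromBlocks_one]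
  rw [← fromCols_mul_fromRows]
  exact matrix_mul_eq_one_symm_of_card_le (hcard.trans_eq Fintype.card_sum.symm) hleft

end StablyFinite

theorem decomposition_identity_general {R n s l : Type*} [CommRing R]
    [Fintype n] [DecidableEq n] [Fintype s] [DecidableEq s] [Fintype l] [DecidableEq l]
    (H B : Matrix n n R) (QS : Matrix n s R) (QL : Matrix n l R)
    (hcard : Fintype.card n ≤ Fintype.card s + Fintype.card l)
    (hS : QSᵀ * H * QS = 1) (hSL : QSᵀ * H * QL = 0)
    (hBSL : QLᵀ * B * QS = 0) (hBL : IsUnit (QLᵀ * B * QL)) :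
    QS * QSᵀ * H + QL * (QLᵀ * B * QL)⁻¹ * QLᵀ * B = 1 := by
  have hVS : (QLᵀ * B * QL)⁻¹ * (QLᵀ * B) * QS = 0 := by
    rw [Matrix.mul_assoc, hBSL, Matrix.mul_zero]
  have hVL : (QLᵀ * B * QL)⁻¹ * (QLᵀ * B) * QL = 1 := by
    rw [Matrix.mul_assoc, nonsing_inv_mul _ ((isUnit_iff_isUnit_det _).mp hBL)]
  simpa only [Matrix.mul_assoc] using mul_add_mul_eq_one_of_biorthogonal hcard hS hSL hVS hVL

/-- Decomposition identity: `Q_S Q_Sᵀ H + Q_L (Q_Lᵀ B Q_L)⁻¹ Q_Lᵀ B = I`. -/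
theorem decomposition_identity {m k : ℕ}
    (H B : Matrix (Fin m) (Fin m) ℝ)
    (hHpd : H.PosDef) (hBsymm : B.IsSymm)
    (QS : Matrix (Fin m) (Fin k) ℝ) (QL : Matrix (Fin m) (Fin (m - k)) ℝ)
    (hS : QSᵀ * H * QS = 1) (hL : QLᵀ * H * QL = 1) (hSL : QSᵀ * H * QL = 0)
    (hBSL : QLᵀ * B * QS = 0) (hBL : IsUnit (QLᵀ * B * QL)) :
    QS * QSᵀ * H + QL * (QLᵀ * B * QL)⁻¹ * QLᵀ * B = 1 :=
  decomposition_identity_general H B QS QL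
    (by simpa only [Fintype.card_fin] using le_add_tsub) hS hSL hBSL hBL
end

section
/- Let n_Γ, n_I, k, m be natural numbers with k + m = n_I. Let B be the (n_Γ+n_I)×(n_Γ+n_I) complex matrix given in block form B = [[B_ΓΓ, B_ΓI],[B_IΓ, B_II]] with B_IΓ = B_ΓIᵀ and B_II symmetric (B_II = B_IIᵀ). Let Q_S be an n_I×k complex matrix and Q_L an n_I×m complex matrix such that Q_Sᵀ B_II Q_L = 0 and Q_Lᵀ B_II Q_L is invertible, and set B_L = Q_L (Q_Lᵀ B_II Q_L)⁻¹ Q_Lᵀ. Then for every v_Γ ∈ ℂ^{n_Γ}, α ∈ ℂ^k and b ∈ ℂ^m, the vectors x = (v_Γ, −B_L B_IΓ v_Γ + Q_S α) and y = (0, Q_L b) satisfy xᵀ B y = 0. -/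
open Matrix

/-!
Since `B_L B_II Q_L = Q_L`, the operator `B_L B_II` fixes every local vector `Q_L b`. Moving
`B_L B_IΓ` to the other side of the product by transposition thus turns the correction
`-B_L B_IΓ v_Γ` into exactly the negative of the interface term `v_Γᵀ B_ΓI Q_L b`, while `Q_S α`
contributes nothing because `Q_Sᵀ B_II Q_L = 0`. Transposition replaces `B_II` by `B_IIᵀ`, so for a
general `B` the extension solves the transposed local problem.
-/

theorem mulVec_dotProduct_mulVec_mulVec {R ι κ μ ν : Type*} [CommSemiring R] [Fintype ι]
    [Fintype κ] [Fintype μ] [Fintype ν] (M : Matrix ι κ R) (A : Matrix ι ν R) (Q : Matrix ν μ R)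
    (u : κ → R) (b : μ → R) :
    (M *ᵥ u) ⬝ᵥ (A *ᵥ (Q *ᵥ b)) = u ⬝ᵥ ((Mᵀ * A * Q) *ᵥ b) := by
  rw [Matrix.mul_assoc, ← mulVec_mulVec, ← mulVec_mulVec, dotProduct_mulVec u, vecMul_transpose]

theorem sumElim_dotProduct_fromBlocks_mulVec_sumElim_zero {R γ γ' ι ι' : Type*}
    [NonUnitalNonAssocSemiring R] [Fintype γ] [Fintype γ'] [Fintype ι] [Fintype ι']
    (A : Matrix γ γ' R) (C : Matrix γ ι' R) (D : Matrix ι γ' R) (E : Matrix ι ι' R)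
    (u : γ → R) (w : ι → R) (z : ι' → R) :
    Sum.elim u w ⬝ᵥ (fromBlocks A C D E *ᵥ Sum.elim 0 z) = u ⬝ᵥ (C *ᵥ z) + w ⬝ᵥ (E *ᵥ z) := by
  simp only [fromBlocks_mulVec, Sum.elim_comp_inl, Sum.elim_comp_inr, mulVec_zero, zero_add,
    sumElim_dotProduct_sumElim]

section CoarseExtension

variable {R γ ι κ μ : Type*} [CommRing R] [Fintype γ] [Fintype ι] [Fintype κ]
  [Fintype μ] [DecidableEq μ]

/-- The Galerkin approximation `Q (Qᵀ A Q)⁻¹ Qᵀ` of the inverse of `A` on the column space of `Q`;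
the matrix `B_L` is `galerkinInverse B_II Q_L`. Since `⁻¹` is the nonsingular inverse, it is zero
when `Qᵀ A Q` is not invertible. -/
noncomputable def galerkinInverse (A : Matrix ι ι R) (Q : Matrix ι μ R) : Matrix ι ι R :=
  Q * (Qᵀ * A * Q)⁻¹ * Qᵀ

theorem transpose_galerkinInverse (A : Matrix ι ι R) (Q : Matrix ι μ R) :
    (galerkinInverse A Q)ᵀ = galerkinInverse Aᵀ Q := by
  simp only [galerkinInverse, transpose_mul, transpose_nonsing_inv, transpose_transpose,
    Matrix.mul_assoc]

theorem galerkinInverse_mul_mul {A : Matrix ι ι R} {Q : Matrix ι μ R}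
    (hQ : IsUnit (Qᵀ * A * Q)) : galerkinInverse A Q * A * Q = Q :=
  calc
    galerkinInverse A Q * A * Q = Q * ((Qᵀ * A * Q)⁻¹ * (Qᵀ * A * Q)) := by
      simp only [galerkinInverse, Matrix.mul_assoc]
    _ = Q := by rw [nonsing_inv_mul _ ((isUnit_iff_isUnit_det _).mp hQ), Matrix.mul_one]

theorem coarse_extension_orthogonal_general
    (BΓΓ : Matrix γ γ R) (BΓI : Matrix γ ι R) (BIΓ : Matrix ι γ R) (BII : Matrix ι ι R)
    (QS : Matrix ι κ R) (QL : Matrix ι μ R)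
    (hSL : QSᵀ * BII * QL = 0) (hinv : IsUnit (QLᵀ * BII * QL))
    (vΓ : γ → R) (α : κ → R) (b : μ → R) :
    Sum.elim vΓ (-((galerkinInverse BIIᵀ QL * BΓIᵀ) *ᵥ vΓ) + QS *ᵥ α) ⬝ᵥ
      (fromBlocks BΓΓ BΓI BIΓ BII *ᵥ Sum.elim 0 (QL *ᵥ b)) = 0 := by
  have hadjoint : (galerkinInverse BIIᵀ QL * BΓIᵀ)ᵀ * BII * QL = BΓI * QL := by
    rw [transpose_mul, transpose_galerkinInverse, transpose_transpose, transpose_transpose,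
      Matrix.mul_assoc, Matrix.mul_assoc, ← Matrix.mul_assoc (galerkinInverse BII QL),
      galerkinInverse_mul_mul hinv]
  have hlocal : ((galerkinInverse BIIᵀ QL * BΓIᵀ) *ᵥ vΓ) ⬝ᵥ (BII *ᵥ (QL *ᵥ b)) =
      vΓ ⬝ᵥ (BΓI *ᵥ (QL *ᵥ b)) := by
    rw [mulVec_dotProduct_mulVec_mulVec, hadjoint, mulVec_mulVec]
  have hcoarse : (QS *ᵥ α) ⬝ᵥ (BII *ᵥ (QL *ᵥ b)) = 0 := by
    rw [mulVec_dotProduct_mulVec_mulVec, hSL, zero_mulVec, dotProduct_zero]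
  rw [sumElim_dotProduct_fromBlocks_mulVec_sumElim_zero, add_dotProduct, neg_dotProduct, hlocal,
    hcoarse, add_zero, add_neg_cancel]

end CoarseExtension

/-- Orthogonality of the coarse extension against the local interior modes:
`xᵀ B y = 0` for `x = (v_Γ, -B_L B_IΓ v_Γ + Q_S α)` and `y = (0, Q_L b)`. -/
theorem coarse_extension_orthogonal {nΓ nI k m : ℕ} (hkm : k + m = nI)
    (BΓΓ : Matrix (Fin nΓ) (Fin nΓ) ℂ) (BΓI : Matrix (Fin nΓ) (Fin nI) ℂ)
    (BIΓ : Matrix (Fin nI) (Fin nΓ) ℂ) (BII : Matrix (Fin nI) (Fin nI) ℂ)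
    (hBIΓ : BIΓ = BΓIᵀ) (hBII : BII.IsSymm)
    (QS : Matrix (Fin nI) (Fin k) ℂ) (QL : Matrix (Fin nI) (Fin m) ℂ)
    (hSL : QSᵀ * BII * QL = 0) (hinv : IsUnit (QLᵀ * BII * QL))
    (vΓ : Fin nΓ → ℂ) (α : Fin k → ℂ) (b : Fin m → ℂ) :
    (Sum.elim vΓ
        (-(QL * (QLᵀ * BII * QL)⁻¹ * QLᵀ * BIΓ).mulVec vΓ + QS.mulVec α)) ⬝ᵥ
      (fromBlocks BΓΓ BΓI BIΓ BII).mulVec (Sum.elim 0 (QL.mulVec b)) = 0 := by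
  simpa only [galerkinInverse, hBII.eq, ← hBIΓ] using
    coarse_extension_orthogonal_general BΓΓ BΓI BIΓ BII QS QL hSL hinv vΓ α b
end

section
/- Let H be an m×m real symmetric positive-definite matrix and B an m×m real symmetric matrix. Let Q_S be an m×k real matrix and Q_L an m×(m−k) real matrix such that Q_Sᵀ H Q_S = I_k, Q_Lᵀ H Q_L = I_{m−k}, Q_Sᵀ H Q_L = 0, and Q_Lᵀ B Q_L is invertible. Then the (m+k)×(m+k) block matrix [[B, H Q_S],[Q_Sᵀ H, 0]] is invertible. -/
open Matrix

/-!
This is the null-space method. Since `Q_S` and `Q_L` together form an `H`-orthonormal basis,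
`Q_S Q_Sᵀ H + Q_L Q_Lᵀ H = 1`, so the kernel of the constraint `Q_Sᵀ H` is the range of `Q_L`, and
the saddle-point problem reduces to `Q_Lᵀ B Q_L`. If the latter is invertible, the operator
`G = Q_L (Q_Lᵀ B Q_L)⁻¹ Q_Lᵀ` (the `B_L` of the paper) is the leading block of an explicit inverse.
Conversely, the leading block `G` of any inverse takes values in that kernel, so that
`G = Q_L Q_Lᵀ H G`, and then `Q_Lᵀ H G H Q_L` inverts `Q_Lᵀ B Q_L`.
-/

variable {R k l n : Type*} [Fintype k] [Fintype l] [Fintype n]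

section RectangularInverses

variable [DecidableEq k]

theorem card_le_card_of_mul_eq_one [Semiring R] [RankCondition R]
    {A : Matrix k n R} {C : Matrix n k R} (h : A * C = 1) : Fintype.card k ≤ Fintype.card n :=
  card_le_of_surjective R C.vecMulLinear (vecMul_surjective_iff_exists_left_inverse.2 ⟨A, h⟩)

theorem mul_add_mul_eq_one_of_biorthogonal_s9 [DecidableEq l] [DecidableEq n]
    [Semiring R] [IsStablyFiniteRing R]
    {A₁ : Matrix k n R} {A₂ : Matrix l n R} {C₁ : Matrix n k R} {C₂ : Matrix n l R}
    (hcard : Fintype.card k + Fintype.card l = Fintype.card n)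
    (h₁₁ : A₁ * C₁ = 1) (h₁₂ : A₁ * C₂ = 0) (h₂₁ : A₂ * C₁ = 0) (h₂₂ : A₂ * C₂ = 1) :
    C₁ * A₁ + C₂ * A₂ = 1 := by
  have hleft : fromRows A₁ A₂ * fromCols C₁ C₂ = 1 := by
    rw [fromRows_mul_fromCols, h₁₁, h₁₂, h₂₁, h₂₂, fromBlocks_one]
  rw [← fromCols_mul_fromRows]
  exact (mul_eq_one_comm_of_card_eq _ _ _ (Fintype.card_sum.trans hcard)).1 hleft

end RectangularInverses

section SaddlePoint

variable [Ring R] [DecidableEq k] [DecidableEq n]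
  {B : Matrix n n R} {C : Matrix n k R} {D : Matrix k n R} {W : Matrix l n R} {X : Matrix n l R}

theorem fromBlocks_zero₂₂_mul_fromBlocks_eq_one
    {G : Matrix n n R} {U : Matrix k n R} {Y : Matrix n k R}
    (hCU : C * U + X * W = 1) (hDY : D * Y = 1) (hDG : D * G = 0) (hWG : W * B * G = W) :
    fromBlocks B C D 0 *
      fromBlocks G ((1 - G * B) * Y) (U * (1 - B * G)) (-(U * (1 - B * G) * B * Y)) = 1 := by
  have hW : W * (1 - B * G) = 0 := by
    rw [Matrix.mul_sub, Matrix.mul_one, ← Matrix.mul_assoc, hWG, sub_self]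
  have hC : C * (U * (1 - B * G)) = 1 - B * G :=
    calc C * (U * (1 - B * G)) = (C * U + X * W) * (1 - B * G) := by
          rw [Matrix.add_mul, Matrix.mul_assoc X, hW, Matrix.mul_zero, add_zero, Matrix.mul_assoc]
      _ = 1 - B * G := by rw [hCU, Matrix.one_mul]
  rw [fromBlocks_multiply, ← fromBlocks_one, fromBlocks_inj]
  refine ⟨?_, ?_, ?_, ?_⟩
  · rw [hC, add_sub_cancel]
  · rw [Matrix.mul_neg, Matrix.mul_assoc (U * _), ← Matrix.mul_assoc C, hC]
    simp only [Matrix.sub_mul, Matrix.mul_sub, Matrix.one_mul, Matrix.mul_assoc, add_neg_cancel]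
  · rw [hDG, Matrix.zero_mul, add_zero]
  · rw [Matrix.zero_mul, add_zero, Matrix.sub_mul, Matrix.one_mul, Matrix.mul_sub, hDY,
      Matrix.mul_assoc G, ← Matrix.mul_assoc D, hDG, Matrix.zero_mul, sub_zero]

theorem compression_mul_eq_one_of_fromBlocks_zero₂₂_mul_eq_one [DecidableEq l]
    {G : Matrix n n R} {N₁₂ : Matrix n k R} {N₂₁ : Matrix k n R} {N₂₂ : Matrix k k R}
    {V : Matrix l n R} {Y : Matrix n k R} {Z : Matrix n l R}
    (hYZ : Y * D + Z * V = 1) (hWC : W * C = 0) (hWX : W * X = 1)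
    (hN : fromBlocks B C D 0 * fromBlocks G N₁₂ N₂₁ N₂₂ = 1) :
    W * B * Z * (V * G * X) = 1 := by
  rw [fromBlocks_multiply, ← fromBlocks_one, fromBlocks_inj, Matrix.zero_mul, add_zero] at hN
  obtain ⟨hBG, -, hDG, -⟩ := hN
  have hG : Z * (V * G) = G :=
    calc Z * (V * G) = (Y * D + Z * V) * G := by
          rw [Matrix.add_mul, Matrix.mul_assoc Y, hDG, Matrix.mul_zero, zero_add, Matrix.mul_assoc]
      _ = G := by rw [hYZ, Matrix.one_mul]
  calc W * B * Z * (V * G * X) = W * (B * (Z * (V * G))) * X := by simp only [Matrix.mul_assoc]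
    _ = W * (B * G + C * N₂₁) * X := by
        rw [hG, Matrix.mul_add, ← Matrix.mul_assoc W C, hWC, Matrix.zero_mul, add_zero]
    _ = 1 := by rw [hBG, Matrix.mul_one, hWX]

end SaddlePoint

theorem saddle_point_invertible_general [CommRing R]
    [DecidableEq k] [DecidableEq l] [DecidableEq n]
    {H B : Matrix n n R} (hH : H.IsSymm) {QS : Matrix n k R} {QL : Matrix n l R}
    (hcard : Fintype.card k + Fintype.card l = Fintype.card n)
    (hS : QSᵀ * H * QS = 1) (hL : QLᵀ * H * QL = 1) (hSL : QSᵀ * H * QL = 0) :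
    IsUnit (fromBlocks B (H * QS) (QSᵀ * H) (0 : Matrix k k R)) ↔ IsUnit (QLᵀ * B * QL) := by
  have hLS : QLᵀ * H * QS = 0 := by
    simpa [transpose_mul, hH.eq, Matrix.mul_assoc] using congrArg transpose hSL
  constructor
  · intro hM
    obtain ⟨N, hN⟩ := hM.exists_right_inv
    rw [← fromBlocks_toBlocks N] at hN
    have hresolution : QS * (QSᵀ * H) + QL * (QLᵀ * H) = 1 :=
      mul_add_mul_eq_one_of_biorthogonal_s9 hcard hS hSL hLS hL
    rw [Matrix.mul_assoc] at hLS hL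
    exact .of_mul_eq_one _
      (compression_mul_eq_one_of_fromBlocks_zero₂₂_mul_eq_one hresolution hLS hL hN)
  · intro hBL
    obtain ⟨K, hK⟩ := hBL.exists_right_inv
    have hconstraint : QSᵀ * H * (QL * K * QLᵀ) = 0 := by
      simp only [← Matrix.mul_assoc, hSL, Matrix.zero_mul]
    have hgalerkin : QLᵀ * B * (QL * K * QLᵀ) = QLᵀ := by
      simp only [← Matrix.mul_assoc, hK, Matrix.one_mul]
    have hresolution : H * QS * QSᵀ + H * QL * QLᵀ = 1 := by
      apply mul_add_mul_eq_one_of_biorthogonal_s9 hcard <;> rwa [← Matrix.mul_assoc]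
    exact .of_mul_eq_one _
      (fromBlocks_zero₂₂_mul_fromBlocks_eq_one hresolution hS hconstraint hgalerkin)

/-- Well-posedness of the saddle-point problem with Lagrange multipliers:
the block matrix `[[B, H Q_S], [Q_Sᵀ H, 0]]` is invertible. -/
theorem saddle_point_invertible {m k : ℕ}
    (H B : Matrix (Fin m) (Fin m) ℝ)
    (hHpd : H.PosDef) (hBsymm : B.IsSymm)
    (QS : Matrix (Fin m) (Fin k) ℝ) (QL : Matrix (Fin m) (Fin (m - k)) ℝ)
    (hS : QSᵀ * H * QS = 1) (hL : QLᵀ * H * QL = 1) (hSL : QSᵀ * H * QL = 0)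
    (hBL : IsUnit (QLᵀ * B * QL)) :
    IsUnit (fromBlocks B (H * QS) (QSᵀ * H) (0 : Matrix (Fin k) (Fin k) ℝ)) := by
  have hkm : k ≤ m := by simpa using card_le_card_of_mul_eq_one hS
  exact (saddle_point_invertible_general (isHermitian_iff_isSymm.1 hHpd.isHermitian)
    (by simp [hkm]) hS hL hSL).2 hBL
end
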